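/- Let F be a real inner product space, let E = F × ℝ with the product inner product ⟨(h,v),(h',v')⟩ = ⟨h,h'⟩ + v·v', and let μ > 0. Given x̂ = (ĥ, v̂) ∈ E, define x̄ = (ĥ, max(v̂, 0)), and define x* = 0 if μ·‖x̄‖ ≤ 1, and x* = (1 − 1/(μ‖x̄‖))·x̄ otherwise (i.e., x* = (1 − 1/(μ‖x̄‖))⁺ · x̄). Then x* lies in the constraint set C = {(h,v) ∈ E : v ≥ 0} and minimizes the function F(x) = (μ/2)·‖x − x̂‖² + ‖x‖ over C: for all x ∈ C, F(x*) ≤ F(x). -/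

import Mathlib

theorem shrink_aux {E : Type*} [NormedAddCommGroup E] [InnerProductSpace ℝ E]
    (μ : ℝ) (hμ : 0 < μ) (a b s x : E)
    (hs : s = if μ * ‖b‖ ≤ 1 then 0 else (1 - 1 / (μ * ‖b‖)) • b)
    (hb : inner ℝ b a = inner ℝ b b) (hx : inner ℝ x a ≤ inner ℝ x b) :
    μ / 2 * ‖s - a‖ ^ 2 + ‖s‖ ≤ μ / 2 * ‖x - a‖ ^ 2 + ‖x‖ := by
  have h1 : inner ℝ x a ≤ ‖x‖ * ‖b‖ := hx.trans (real_inner_le_norm x b)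
  have hn := norm_nonneg x
  have h2 := mul_le_mul_of_nonneg_left h1 hμ.le
  rw [norm_sub_sq_real, norm_sub_sq_real]
  split_ifs at hs with h
  · subst hs
    simp only [norm_zero, inner_zero_left]
    nlinarith [mul_nonneg hn (sub_nonneg.2 h), mul_nonneg hμ.le (sq_nonneg ‖x‖)]
  · push Not at h
    have hbpos : 0 < ‖b‖ := by
      by_contra hc
      have : ‖b‖ = 0 := le_antisymm (not_lt.1 hc) (norm_nonneg b)
      rw [this] at h
      linarith [mul_zero μ]
    have hc : 0 ≤ 1 - 1 / (μ * ‖b‖) := by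
      rw [sub_nonneg, div_le_one (by linarith)]
      exact h.le
    have hsn : ‖s‖ = ‖b‖ - 1 / μ := by
      rw [hs, norm_smul, Real.norm_of_nonneg hc]
      field_simp
    have hsi : inner ℝ s a = (‖b‖ - 1 / μ) * ‖b‖ := by
      rw [hs, real_inner_smul_left, hb, real_inner_self_eq_norm_sq]
      field_simp
    rw [hsn, hsi]
    have key : μ / 2 * (‖x‖ ^ 2 - 2 * (‖x‖ * ‖b‖) + ‖a‖ ^ 2) + ‖x‖
        - (μ / 2 * ((‖b‖ - 1 / μ) ^ 2 - 2 * ((‖b‖ - 1 / μ) * ‖b‖) + ‖a‖ ^ 2) + (‖b‖ - 1 / μ))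
        = μ / 2 * (‖x‖ - (‖b‖ - 1 / μ)) ^ 2 := by
      field_simp
      ring
    have : 0 ≤ μ / 2 * (‖x‖ - (‖b‖ - 1 / μ)) ^ 2 := by positivity
    nlinarith

/-- The constrained shrinkage operator used in the local ADMM step: on
`E = F ×₂ ℝ` (product inner product space), given `x̂ = (ĥ, v̂)`, setting
`x̄ = (ĥ, v̂⁺)` and `x* = (1 - 1/(μ‖x̄‖))⁺ • x̄`, the point `x*` is feasible for
`v ≥ 0` and minimizes `(μ/2)‖x - x̂‖² + ‖x‖` over that constraint set. -/
theorem constrained_shrinkage_is_minimizer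
    {F : Type*} [NormedAddCommGroup F] [InnerProductSpace ℝ F]
    (μ : ℝ) (hμ : 0 < μ) (xhat xbar xstar : WithLp 2 (F × ℝ))
    (hxbar : xbar = (WithLp.equiv 2 (F × ℝ)).symm
      ((WithLp.equiv 2 (F × ℝ) xhat).1, max (WithLp.equiv 2 (F × ℝ) xhat).2 0))
    (hxstar : xstar =
      if μ * ‖xbar‖ ≤ 1 then 0 else (1 - 1 / (μ * ‖xbar‖)) • xbar) :
    0 ≤ (WithLp.equiv 2 (F × ℝ) xstar).2 ∧
    ∀ x : WithLp 2 (F × ℝ), 0 ≤ (WithLp.equiv 2 (F × ℝ) x).2 →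
      μ / 2 * ‖xstar - xhat‖ ^ 2 + ‖xstar‖ ≤ μ / 2 * ‖x - xhat‖ ^ 2 + ‖x‖ := by
  have hb1 : xbar.fst = xhat.fst := by rw [hxbar]; rfl
  have hb2 : xbar.snd = max xhat.snd 0 := by rw [hxbar]; rfl
  refine ⟨?_, fun x hx => shrink_aux μ hμ xhat xbar xstar x hxstar ?_ ?_⟩
  · change 0 ≤ xstar.snd
    split_ifs at hxstar with h
    · rw [hxstar]; exact le_refl (0 : ℝ)
    · push Not at h
      have hc : 0 ≤ 1 - 1 / (μ * ‖xbar‖) := by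
        rw [sub_nonneg, div_le_one (by linarith)]
        exact h.le
      have : xstar.snd = (1 - 1 / (μ * ‖xbar‖)) * xbar.snd := by
        rw [hxstar]; rfl
      rw [this, hb2]
      exact mul_nonneg hc (le_max_right _ _)
  · rw [WithLp.prod_inner_apply, WithLp.prod_inner_apply]
    change inner ℝ xbar.fst xhat.fst + inner ℝ xbar.snd xhat.snd
      = inner ℝ xbar.fst xbar.fst + inner ℝ xbar.snd xbar.snd
    rw [hb1, hb2]
    rcases le_total xhat.snd 0 with h | h <;> simp [h]
  · change 0 ≤ x.snd at hx
    rw [WithLp.prod_inner_apply, WithLp.prod_inner_apply]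
    change inner ℝ x.fst xhat.fst + inner ℝ x.snd xhat.snd
      ≤ inner ℝ x.fst xbar.fst + inner ℝ x.snd xbar.snd
    rw [hb1, hb2]
    have h1 : inner ℝ x.snd xhat.snd = x.snd * xhat.snd := by simp [mul_comm]
    have h2 : inner ℝ x.snd (max xhat.snd 0) = x.snd * max xhat.snd 0 := by simp [mul_comm]
    rw [h1, h2]
    have := mul_le_mul_of_nonneg_left (le_max_left xhat.snd 0) hx
    linarith
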